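/- Let T=(V,E) be a leafless directed tree with a root, let λ={λ_v}_{v∈V} be a sequence of positive real numbers, and let 1 ≤ q < ∞. Assume the backward shift B : L^q(T,λ) → L^q(T,λ) is bounded. If there exists an increasing sequence of natural numbers {n_k} such that for every u ∈ V one has Ω(u,n_k) → 0 as k → ∞, where Ω(u,n) = γ(u,n)^{−q} Σ_{v∈child^n(u)} λ_v, then B is hypercyclic. -/

import Mathlib

/-!
A separable Banach space carries a vector with dense orbit under `B` as soon as, along some sequence
`n_k`, the powers `B ^ n_k` tend to zero on a spanning set and admit approximate right inverses that
tend to zero on a spanning set (Baire category). For the backward shift take the point masses as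
spanning set. Since `Bⁿ f (u)` is the sum of `f` over the `n`-th generation below `u`, a point mass
at depth `m` is killed by `Bⁿ` for `n > m`, and the function spreading mass `1` uniformly over that
generation is mapped by `Bⁿ` exactly to the point mass at `u`. The `q`-th power of its norm is
`Ω(u, n)`, which tends to zero along `n_k`.
-/

open Filter

attribute [local instance] Classical.propDecidable
open scoped ENNReal

/-- A directed tree: a locally finite directed graph on a (countably infinite)
vertex set with no directed circuits, whose underlying undirected graph is
connected, and in which every vertex has indegree at most one. -/
structure DirTree (V : Type) where
  E : V → V → Prop
  finIn : ∀ v : V, {u : V | E u v}.Finite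
  finOut : ∀ v : V, {u : V | E v u}.Finite
  noCircuit : ∀ (n : ℕ) (c : Fin (n + 1) → V), Function.Injective c →
    (∀ i : Fin n, E (c i.castSucc) (c i.succ)) → ¬ E (c (Fin.last n)) (c 0)
  conn : (SimpleGraph.fromRel E).Connected
  indeg : ∀ ⦃u w v : V⦄, E u v → E w v → u = w

namespace DirTree

variable {V : Type} (T : DirTree V)

/-- A root is a vertex of indegree zero. -/
def IsRoot (r : V) : Prop := ∀ u : V, ¬ T.E u r

/-- The set of children of a vertex. -/
def child (u : V) : Set V := {v : V | T.E u v}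

/-- A leaf is a vertex of outdegree zero. -/
def IsLeaf (u : V) : Prop := ¬ (T.child u).Nonempty

/-- The (forward) shift `(S f)(v) = f (parent v)`, with `(S f)(root) = 0`. -/
noncomputable def shift (f : V → ℂ) (v : V) : ℂ :=
  if h : ∃ u : V, T.E u v then f h.choose else 0

/-- The backward shift `(B f)(u) = ∑_{v ∈ child u} f v`. -/
noncomputable def bwd (f : V → ℂ) (u : V) : ℂ :=
  ∑' v : T.child u, f v.1

/-- The operator `(S* g)(u) = ∑_{v ∈ child u} g v · λ_v / λ_u`. -/
noncomputable def sstar (lam : V → ℝ) (g : V → ℂ) (u : V) : ℂ :=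
  ∑' v : T.child u, g v.1 * ((lam v.1 / lam u : ℝ) : ℂ)

/-- `childN n u` is the set of vertices `v` with `parentⁿ v = u`. -/
def childN (T : DirTree V) : ℕ → V → Set V
  | 0, u => {u}
  | n + 1, u => {w : V | ∃ v ∈ T.child u, w ∈ childN T n v}

/-- `γ(u,n)`, the cardinality of `childN n u`. -/
noncomputable def gam (u : V) (n : ℕ) : ℕ := (T.childN n u).ncard

/-- The `n`-th ancestor `parentⁿ u` of `u` (junk value `u` if it does not exist). -/
noncomputable def anc (u : V) (n : ℕ) : V :=
  if h : ∃ w : V, u ∈ T.childN n w then h.choose else u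

/-- A leafless directed tree has a free end if some vertex is such that all of
its descendants have outdegree one. -/
def FreeEnd : Prop :=
  ∃ w : V, ∀ n : ℕ, 0 < n → ∀ v ∈ T.childN n w, (T.child v).ncard = 1

end DirTree

/-- Membership in the weighted space `L^p(T,λ)`. -/
def MemLp' {V : Type} (lam : V → ℝ) (p : ℝ) (f : V → ℂ) : Prop :=
  Summable (fun v => ‖f v‖ ^ p * lam v)

/-- The norm of the weighted space `L^p(T,λ)`. -/
noncomputable def pNorm {V : Type} (lam : V → ℝ) (p : ℝ) (f : V → ℂ) : ℝ :=
  (∑' v, ‖f v‖ ^ p * lam v) ^ (1 / p)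

/-- Boundedness of an operator on `L^p(T,λ)`. -/
def BoundedOn {V : Type} (lam : V → ℝ) (p : ℝ) (A : (V → ℂ) → (V → ℂ)) : Prop :=
  ∃ C : ℝ, 0 ≤ C ∧ ∀ f : V → ℂ, MemLp' lam p f →
    MemLp' lam p (A f) ∧ pNorm lam p (A f) ≤ C * pNorm lam p f

/-- Hypercyclicity of an operator on `L^p(T,λ)`: some `f ∈ L^p(T,λ)` has dense
orbit `{Aⁿ f : n ∈ ℕ}`. -/
def Hypercyclic {V : Type} (lam : V → ℝ) (p : ℝ) (A : (V → ℂ) → (V → ℂ)) : Prop :=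
  ∃ f : V → ℂ, MemLp' lam p f ∧ ∀ g : V → ℂ, MemLp' lam p g → ∀ ε : ℝ, 0 < ε →
    ∃ n : ℕ, MemLp' lam p (A^[n] f - g) ∧ pNorm lam p (A^[n] f - g) < ε

section Universality

variable {ι X Y : Type*}

/-- Baire category: for each basic open `W`, the points `x` with some `f i x ∈ W` form an open dense
set, and there are countably many `W`. -/
theorem exists_denseRange_of_transitive [TopologicalSpace X] [BaireSpace X] [Nonempty X]
    [TopologicalSpace Y] [SecondCountableTopology Y] {f : ι → X → Y}
    (hf : ∀ i, Continuous (f i))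
    (htrans : ∀ U : Set X, IsOpen U → U.Nonempty → ∀ W : Set Y, IsOpen W → W.Nonempty →
      ∃ i, (U ∩ f i ⁻¹' W).Nonempty) :
    ∃ x, DenseRange fun i => f i x := by
  have hdense : Dense (⋂ W ∈ TopologicalSpace.countableBasis Y, ⋃ i, f i ⁻¹' W) := by
    refine dense_biInter_of_isOpen (fun W hW => ?_) (TopologicalSpace.countable_countableBasis Y)
      fun W hW => ?_
    · exact isOpen_iUnion fun i =>
        (TopologicalSpace.isOpen_of_mem_countableBasis hW).preimage (hf i)
    · refine dense_iff_inter_open.2 fun U hU hUne => ?_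
      obtain ⟨i, x, hxU, hxW⟩ := htrans U hU hUne W
        (TopologicalSpace.isOpen_of_mem_countableBasis hW)
        (TopologicalSpace.nonempty_of_mem_countableBasis hW)
      exact ⟨x, hxU, Set.mem_iUnion.2 ⟨i, hxW⟩⟩
  obtain ⟨x, hx⟩ := hdense.nonempty
  refine ⟨x, (TopologicalSpace.isBasis_countableBasis Y).dense_iff.2 fun W hW _ => ?_⟩
  obtain ⟨i, hi⟩ := Set.mem_iUnion.1 (Set.mem_iInter₂.1 hx W hW)
  exact ⟨f i x, hi, i, rfl⟩

variable {𝕜 : Type*} [Semiring 𝕜] [AddCommMonoid X] [Module 𝕜 X] [AddCommMonoid Y] [Module 𝕜 Y]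
  [TopologicalSpace Y] [ContinuousAdd Y] [ContinuousConstSMul 𝕜 Y] {l : Filter ι}

theorem tendsto_zero_of_mem_span {T : ι → X →ₗ[𝕜] Y} {s : Set X}
    (hs : ∀ x ∈ s, Tendsto (fun i => T i x) l (nhds 0)) {x : X} (hx : x ∈ Submodule.span 𝕜 s) :
    Tendsto (fun i => T i x) l (nhds 0) := by
  induction hx using Submodule.span_induction with
  | mem x hx => exact hs x hx
  | zero => simpa only [map_zero] using tendsto_const_nhds
  | add x y _ _ hx hy => simpa only [map_add, add_zero] using hx.add hy
  | smul a x _ hx => simpa only [map_smul, smul_zero] using hx.const_smul a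

variable [TopologicalSpace X] [ContinuousAdd X] [ContinuousConstSMul 𝕜 X]

theorem exists_tendsto_preimage_of_mem_span {T : ι → X →ₗ[𝕜] Y} {s : Set Y}
    (hs : ∀ y ∈ s, ∃ z : ι → X, Tendsto z l (nhds 0) ∧ Tendsto (fun i => T i (z i)) l (nhds y))
    {y : Y} (hy : y ∈ Submodule.span 𝕜 s) :
    ∃ z : ι → X, Tendsto z l (nhds 0) ∧ Tendsto (fun i => T i (z i)) l (nhds y) := by
  induction hy using Submodule.span_induction with
  | mem y hy => exact hs y hy
  | zero =>
    exact ⟨0, tendsto_const_nhds, by simpa only [Pi.zero_apply, map_zero] using tendsto_const_nhds⟩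
  | add y₁ y₂ _ _ h₁ h₂ =>
    obtain ⟨z₁, hz₁, hTz₁⟩ := h₁
    obtain ⟨z₂, hz₂, hTz₂⟩ := h₂
    exact ⟨fun i => z₁ i + z₂ i, by simpa only [add_zero] using hz₁.add hz₂,
      by simpa only [map_add] using hTz₁.add hTz₂⟩
  | smul a y _ h =>
    obtain ⟨z, hz, hTz⟩ := h
    exact ⟨fun i => a • z i, by simpa only [smul_zero] using hz.const_smul a,
      by simpa only [map_smul] using hTz.const_smul a⟩

/-- The Kitai–Gethner–Shapiro criterion, for a family of operators instead of powers of one. -/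
theorem exists_denseRange_of_dense_span [BaireSpace X] [SecondCountableTopology Y] [l.NeBot]
    {T : ι → X →L[𝕜] Y} {s : Set X} {t : Set Y}
    (hs : Dense (Submodule.span 𝕜 s : Set X)) (ht : Dense (Submodule.span 𝕜 t : Set Y))
    (hTs : ∀ x ∈ s, Tendsto (fun i => T i x) l (nhds 0))
    (hTt : ∀ y ∈ t, ∃ z : ι → X, Tendsto z l (nhds 0) ∧ Tendsto (fun i => T i (z i)) l (nhds y)) :
    ∃ x, DenseRange fun i => T i x := by
  refine exists_denseRange_of_transitive (fun i => (T i).continuous) fun U hU hUne W hW hWne => ?_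
  obtain ⟨x, hxU, hx⟩ := hs.inter_open_nonempty U hU hUne
  obtain ⟨y, hyW, hy⟩ := ht.inter_open_nonempty W hW hWne
  have hTx : Tendsto (fun i => T i x) l (nhds 0) :=
    tendsto_zero_of_mem_span (T := fun i => (T i).toLinearMap) hTs hx
  obtain ⟨z, hz, hTz⟩ :=
    exists_tendsto_preimage_of_mem_span (T := fun i => (T i).toLinearMap) hTt hy
  have hxz : Tendsto (fun i => x + z i) l (nhds x) := by simpa only [add_zero] using hz.const_add x
  have hTxz : Tendsto (fun i => T i (x + z i)) l (nhds y) := by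
    simpa only [map_add, zero_add, ContinuousLinearMap.coe_coe] using hTx.add hTz
  obtain ⟨i, hiU, hiW⟩ := ((hxz.eventually (hU.mem_nhds hxU)).and
    (hTxz.eventually (hW.mem_nhds hyW))).exists
  exact ⟨i, x + z i, hiU, hiW⟩

end Universality

theorem separableSpace_of_dense_span {𝕜 X : Type*} [Semiring 𝕜] [TopologicalSpace 𝕜]
    [TopologicalSpace.SeparableSpace 𝕜] [AddCommMonoid X] [Module 𝕜 X] [TopologicalSpace X]
    [ContinuousAdd X] [ContinuousSMul 𝕜 X] {s : Set X} (hs : s.Countable)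
    (hdense : Dense (Submodule.span 𝕜 s : Set X)) : TopologicalSpace.SeparableSpace X := by
  rw [← TopologicalSpace.isSeparable_univ_iff, ← hdense.closure_eq]
  exact (TopologicalSpace.IsSeparable.span hs.isSeparable).closure

theorem dense_span_range_lp_single {V 𝕜 : Type*} [DecidableEq V] [NormedField 𝕜] {p : ℝ≥0∞}
    [Fact (1 ≤ p)] (hp : p ≠ ⊤) {a : V → 𝕜} (ha : ∀ v, a v ≠ 0) :
    Dense (Submodule.span 𝕜 (Set.range fun v => lp.single (E := fun _ => 𝕜) p v (a v)) :
      Set (lp (fun _ : V => 𝕜) p)) := by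
  intro x
  refine mem_closure_of_tendsto (lp.hasSum_single hp x) (Eventually.of_forall fun s => ?_)
  refine Submodule.sum_mem _ fun v _ => ?_
  have hsmul :
      lp.single p v (x v) = (x v / a v) • lp.single (E := fun _ => 𝕜) p v (a v) := by
    rw [← lp.single_smul, smul_eq_mul, div_mul_cancel₀ _ (ha v)]
  rw [hsmul]
  exact Submodule.smul_mem _ _ (Submodule.subset_span ⟨v, rfl⟩)

theorem ofReal_rpow_ne_zero {a : ℝ} (ha : 0 < a) (s : ℝ) : ((a ^ s : ℝ) : ℂ) ≠ 0 :=
  Complex.ofReal_ne_zero.2 (Real.rpow_pos_of_pos ha s).ne'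

theorem norm_div_rpow_one_div_rpow_mul {a q : ℝ} (ha : 0 < a) (hq : q ≠ 0) (z : ℂ) :
    ‖z / (a ^ (1 / q) : ℝ)‖ ^ q * a = ‖z‖ ^ q := by
  have hroot : 0 ≤ a ^ (1 / q) := Real.rpow_nonneg ha.le _
  rw [norm_div, Complex.norm_of_nonneg hroot, Real.div_rpow (norm_nonneg z) hroot,
    ← Real.rpow_mul ha.le, one_div_mul_cancel hq, Real.rpow_one, div_mul_cancel₀ _ ha.ne']

section WeightedSpace

variable {V : Type} {lam : V → ℝ} {q : ℝ}

theorem MemLp'.of_finite_support (hq : q ≠ 0) {f : V → ℂ} (hf : f.support.Finite) :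
    MemLp' lam q f := by
  refine summable_of_hasFiniteSupport (hf.subset fun v hv hfv => hv ?_)
  simp only [hfv, norm_zero, Real.zero_rpow hq, zero_mul]

theorem pNorm_zero (lam : V → ℝ) (hq : q ≠ 0) : pNorm lam q 0 = 0 := by
  simp only [pNorm, Pi.zero_apply, norm_zero, Real.zero_rpow hq, zero_mul, tsum_zero,
    Real.zero_rpow (one_div_ne_zero hq)]

/-- The unweighted space `ℓ^q` on `V`, a Banach space for `1 ≤ q`. -/
abbrev UnweightedLp (V : Type) (q : ℝ) : Type :=
  lp (fun _ : V => ℂ) (ENNReal.ofReal q)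

/-- The isometry from `ℓ^q` onto the weighted space `L^q(T,λ)` that divides by `λ_v ^ (1/q)`. As
`L^q(T,λ)` is only a predicate on functions, the codomain is all of `V → ℂ`. -/
noncomputable def toWeighted (lam : V → ℝ) (q : ℝ) :
    UnweightedLp V q →ₗ[ℂ] V → ℂ where
  toFun x v := x v / (lam v ^ (1 / q) : ℝ)
  map_add' x y := funext fun v => add_div (x v) (y v) _
  map_smul' a x := funext fun v => mul_div_assoc a (x v) _

theorem toWeighted_injective (hlam : ∀ v, 0 < lam v) : Function.Injective (toWeighted lam q) :=
  fun _ _ hxy => lp.ext <| funext fun v =>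
    (div_left_inj' (ofReal_rpow_ne_zero (hlam v) (1 / q))).1 (congrFun hxy v)

theorem toWeighted_single (hlam : ∀ v, 0 < lam v) (v : V) :
    toWeighted lam q (lp.single _ v ((lam v ^ (1 / q) : ℝ) : ℂ)) = Pi.single v 1 := by
  funext w
  rcases eq_or_ne w v with rfl | hwv
  · simp [toWeighted, ofReal_rpow_ne_zero (hlam w)]
  · simp [toWeighted, hwv]

theorem pNorm_toWeighted (hlam : ∀ v, 0 < lam v) (hq : 0 < q)
    (x : UnweightedLp V q) : pNorm lam q (toWeighted lam q x) = ‖x‖ := by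
  have hqReal : (ENNReal.ofReal q).toReal = q := ENNReal.toReal_ofReal hq.le
  rw [lp.norm_eq_tsum_rpow (by rwa [hqReal]), hqReal, pNorm]
  congr 1
  exact tsum_congr fun v => norm_div_rpow_one_div_rpow_mul (hlam v) hq.ne' (x v)

theorem mem_range_toWeighted_iff (hlam : ∀ v, 0 < lam v) (hq : 0 < q) {f : V → ℂ} :
    f ∈ (toWeighted lam q).range ↔ MemLp' lam q f := by
  have hqReal : (ENNReal.ofReal q).toReal = q := ENNReal.toReal_ofReal hq.le
  have hmem (x : V → ℂ) : Memℓp x (ENNReal.ofReal q) ↔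
      MemLp' lam q fun v => x v / (lam v ^ (1 / q) : ℝ) := by
    rw [memℓp_gen_iff (by rwa [hqReal]), hqReal]
    exact summable_congr fun v => (norm_div_rpow_one_div_rpow_mul (hlam v) hq.ne' (x v)).symm
  constructor
  · rintro ⟨x, rfl⟩
    exact (hmem x).1 (lp.memℓp x)
  · intro hf
    have hdiv : (fun v => f v * (lam v ^ (1 / q) : ℝ) / (lam v ^ (1 / q) : ℝ)) = f :=
      funext fun v => mul_div_cancel_right₀ _ (ofReal_rpow_ne_zero (hlam v) _)
    exact ⟨⟨_, (hmem fun v => f v * (lam v ^ (1 / q) : ℝ)).2 (by rwa [hdiv])⟩, hdiv⟩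

variable {A : (V → ℂ) → V → ℂ}

theorem BoundedOn.exists_clm_toWeighted [Fact (1 ≤ ENNReal.ofReal q)] (hA : BoundedOn lam q A)
    (hlin : IsLinearMap ℂ A) (hlam : ∀ v, 0 < lam v) :
    ∃ B : UnweightedLp V q →L[ℂ] UnweightedLp V q,
      ∀ x, toWeighted lam q (B x) = A (toWeighted lam q x) := by
  have hq : 0 < q := zero_lt_one.trans_le (ENNReal.one_le_ofReal.1 Fact.out)
  obtain ⟨C, -, hC⟩ := hA
  have hbound (x) := hC (toWeighted lam q x) ((mem_range_toWeighted_iff hlam hq).1 ⟨x, rfl⟩)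
  let B := (LinearEquiv.ofInjective _ (toWeighted_injective hlam)).symm.toLinearMap ∘ₗ
    (hlin.mk' A ∘ₗ toWeighted lam q).codRestrict (toWeighted lam q).range
      fun x => (mem_range_toWeighted_iff hlam hq).2 (hbound x).1
  have hB (x) : toWeighted lam q (B x) = A (toWeighted lam q x) :=
    congrArg Subtype.val (LinearEquiv.apply_symm_apply
      (LinearEquiv.ofInjective _ (toWeighted_injective hlam)) _)
  refine ⟨B.mkContinuous C fun x => ?_, hB⟩
  rw [← pNorm_toWeighted hlam hq, ← pNorm_toWeighted hlam hq, hB]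
  exact (hbound x).2

theorem Hypercyclic.of_semiconj_toWeighted [Fact (1 ≤ ENNReal.ofReal q)] (hlam : ∀ v, 0 < lam v)
    {B : UnweightedLp V q → UnweightedLp V q}
    (hB : Function.Semiconj (toWeighted lam q) B A)
    {x : UnweightedLp V q} (hx : DenseRange fun n : ℕ => B^[n] x) :
    Hypercyclic lam q A := by
  have hq : 0 < q := zero_lt_one.trans_le (ENNReal.one_le_ofReal.1 Fact.out)
  refine ⟨toWeighted lam q x, (mem_range_toWeighted_iff hlam hq).1 ⟨x, rfl⟩, fun g hg ε hε => ?_⟩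
  obtain ⟨y, rfl⟩ := (mem_range_toWeighted_iff hlam hq).2 hg
  obtain ⟨n, hn⟩ := hx.exists_dist_lt y hε
  have hsub : A^[n] (toWeighted lam q x) - toWeighted lam q y = toWeighted lam q (B^[n] x - y) := by
    rw [map_sub, (hB.iterate_right n).eq]
  refine ⟨n, ?_⟩
  rw [hsub, pNorm_toWeighted hlam hq, ← dist_eq_norm, dist_comm]
  exact ⟨(mem_range_toWeighted_iff hlam hq).1 ⟨_, rfl⟩, hn⟩

theorem BoundedOn.hypercyclic_of_tendsto_single [Countable V] {ι : Type*} {l : Filter ι} [l.NeBot]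
    {n : ι → ℕ} (hA : BoundedOn lam q A) (hlin : IsLinearMap ℂ A) (hlam : ∀ v, 0 < lam v)
    (hq : 1 ≤ q)
    (hker : ∀ v, Tendsto (fun i => pNorm lam q (A^[n i] (Pi.single v 1))) l (nhds 0))
    (hinv : ∀ v, ∃ z : ι → V → ℂ, (∀ i, MemLp' lam q (z i)) ∧
      Tendsto (fun i => pNorm lam q (z i)) l (nhds 0) ∧
      Tendsto (fun i => pNorm lam q (A^[n i] (z i) - Pi.single v 1)) l (nhds 0)) :
    Hypercyclic lam q A := by
  have hq0 : 0 < q := zero_lt_one.trans_le hq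
  have : Fact (1 ≤ ENNReal.ofReal q) := ⟨ENNReal.one_le_ofReal.2 hq⟩
  obtain ⟨B, hB⟩ := hA.exists_clm_toWeighted hlin hlam
  have hpow (m : ℕ) (x) : toWeighted lam q ((B ^ m) x) = A^[m] (toWeighted lam q x) := by
    rw [FunLike.coe_pow_eq_iterate, (Function.Semiconj.iterate_right hB m).eq]
  have hdense := dense_span_range_lp_single ENNReal.ofReal_ne_top
    (p := ENNReal.ofReal q) fun v => ofReal_rpow_ne_zero (hlam v) (1 / q)
  have := separableSpace_of_dense_span (Set.countable_range _) hdense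
  have := UniformSpace.secondCountable_of_separable (UnweightedLp V q)
  obtain ⟨x, hx⟩ : ∃ x, DenseRange fun i => (B ^ n i) x := by
    refine exists_denseRange_of_dense_span (l := l) hdense hdense ?_ ?_
    · rintro _ ⟨v, rfl⟩
      rw [tendsto_zero_iff_norm_tendsto_zero]
      simpa only [← pNorm_toWeighted hlam hq0, hpow, toWeighted_single hlam] using hker v
    · rintro _ ⟨v, rfl⟩
      obtain ⟨z, hz, hz0, hAz⟩ := hinv v
      choose y hy using fun i => (mem_range_toWeighted_iff hlam hq0).2 (hz i)
      refine ⟨y, tendsto_zero_iff_norm_tendsto_zero.2 ?_, tendsto_iff_norm_sub_tendsto_zero.2 ?_⟩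
      · simpa only [← pNorm_toWeighted hlam hq0, hy] using hz0
      · simpa only [← pNorm_toWeighted hlam hq0, map_sub, hpow, hy, toWeighted_single hlam]
          using hAz
  refine .of_semiconj_toWeighted hlam hB (x := x) (hx.mono ?_)
  rintro _ ⟨i, rfl⟩
  exact ⟨n i, congrFun (FunLike.coe_pow_eq_iterate B (n i)).symm x⟩

end WeightedSpace

namespace DirTree

variable {V : Type} (T : DirTree V)

theorem childN_succ (n : ℕ) (u : V) : T.childN (n + 1) u = ⋃ v ∈ T.child u, T.childN n v := by
  ext w
  simp only [childN, Set.mem_ofPred_eq, Set.mem_iUnion, exists_prop]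

theorem mem_childN_succ_iff {n : ℕ} {u w : V} :
    w ∈ T.childN (n + 1) u ↔ ∃ v ∈ T.childN n u, T.E v w := by
  induction n generalizing u with
  | zero => simp [childN, child]
  | succ n ih =>
    constructor
    · rintro ⟨v, hv, hw⟩
      obtain ⟨x, hx, hxw⟩ := ih.1 hw
      exact ⟨x, ⟨v, hv, hx⟩, hxw⟩
    · rintro ⟨x, ⟨v, hv, hx⟩, hxw⟩
      exact ⟨v, hv, ih.2 ⟨x, hx, hxw⟩⟩

theorem finite_childN (n : ℕ) (u : V) : (T.childN n u).Finite := by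
  induction n generalizing u with
  | zero => exact Set.finite_singleton u
  | succ n ih =>
    rw [childN_succ]
    exact (T.finOut u).biUnion fun v _ => ih v

variable {T}

theorem childN_nonempty (hleafless : ∀ u, ¬ T.IsLeaf u) (n : ℕ) (u : V) :
    (T.childN n u).Nonempty := by
  induction n generalizing u with
  | zero => exact Set.singleton_nonempty u
  | succ n ih =>
    obtain ⟨v, hv⟩ := not_not.1 (hleafless u)
    obtain ⟨w, hw⟩ := ih v
    exact ⟨w, v, hv, hw⟩

theorem eq_of_mem_childN {n : ℕ} {u u' w : V} (h : w ∈ T.childN n u) (h' : w ∈ T.childN n u') :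
    u = u' := by
  induction n generalizing w with
  | zero => exact Eq.trans (Eq.symm h) h'
  | succ n ih =>
    obtain ⟨v, hv, hvw⟩ := T.mem_childN_succ_iff.1 h
    obtain ⟨v', hv', hvw'⟩ := T.mem_childN_succ_iff.1 h'
    obtain rfl := T.indeg hvw hvw'
    exact ih hv hv'

theorem IsRoot.exists_mem_childN {r : V} (hr : T.IsRoot r) (v : V) : ∃ n, v ∈ T.childN n r := by
  have hreach := T.conn.preconnected r v
  rw [SimpleGraph.reachable_iff_reflTransGen] at hreach
  induction hreach with
  | refl => exact ⟨0, rfl⟩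
  | @tail b c _ hbc ih =>
    obtain ⟨n, hn⟩ := ih
    rcases ((SimpleGraph.fromRel_adj _ _ _).1 hbc).2 with hbc | hcb
    · exact ⟨n + 1, T.mem_childN_succ_iff.2 ⟨b, hn, hbc⟩⟩
    · cases n with
      | zero =>
        obtain rfl : b = r := hn
        exact absurd hcb (hr c)
      | succ n =>
        obtain ⟨x, hx, hxb⟩ := T.mem_childN_succ_iff.1 hn
        exact ⟨n, T.indeg hcb hxb ▸ hx⟩

theorem IsRoot.le_of_mem_childN {r : V} (hr : T.IsRoot r) {m n : ℕ} {u v : V}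
    (hm : v ∈ T.childN m r) (hn : v ∈ T.childN n u) : n ≤ m := by
  induction n generalizing m v with
  | zero => exact Nat.zero_le m
  | succ n ih =>
    obtain ⟨x, hx, hxv⟩ := T.mem_childN_succ_iff.1 hn
    cases m with
    | zero =>
      obtain rfl : v = r := hm
      exact absurd hxv (hr x)
    | succ m =>
      obtain ⟨y, hy, hyv⟩ := T.mem_childN_succ_iff.1 hm
      obtain rfl := T.indeg hxv hyv
      exact Nat.succ_le_succ (ih hy hx)

variable (T)

theorem bwd_apply_eq_finsum (f : V → ℂ) (u : V) : T.bwd f u = ∑ᶠ v ∈ T.child u, f v := by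
  have : Finite (T.child u) := T.finOut u
  rw [bwd, tsum_eq_finsum (Set.toFinite _), finsum_set_coe_eq_finsum_mem]

theorem isLinearMap_bwd : IsLinearMap ℂ T.bwd where
  map_add f g := funext fun u => by
    simp only [Pi.add_apply, bwd_apply_eq_finsum]
    exact finsum_mem_add_distrib (T.finOut u)
  map_smul a f := funext fun u => tsum_mul_left (a := a) (f := fun v : T.child u => f v)

theorem bwd_iterate_apply (n : ℕ) (f : V → ℂ) (u : V) :
    T.bwd^[n] f u = ∑ᶠ v ∈ T.childN n u, f v := by
  induction n generalizing u with
  | zero => simp [childN]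
  | succ n ih =>
    have hdisj : (T.child u).PairwiseDisjoint (T.childN n) := fun v _ v' _ hne =>
      Set.disjoint_left.2 fun _ hw hw' => hne (eq_of_mem_childN hw hw')
    rw [Function.iterate_succ_apply', bwd_apply_eq_finsum, childN_succ,
      finsum_mem_biUnion hdisj (T.finOut u) fun v _ => T.finite_childN n v]
    simp only [ih]

variable {T} in
theorem IsRoot.bwd_iterate_single_eq_zero {r : V} (hr : T.IsRoot r) {m n : ℕ} {v : V}
    (hv : v ∈ T.childN m r) (hmn : m < n) (a : ℂ) : T.bwd^[n] (Pi.single v a) = 0 := by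
  funext u
  rw [bwd_iterate_apply]
  refine finsum_mem_eq_zero_of_forall_eq_zero fun w hw => Pi.single_eq_of_ne (M := fun _ => ℂ) ?_ a
  rintro rfl
  exact hmn.not_ge (hr.le_of_mem_childN hv hw)

/-- The function of total mass `1` spread uniformly over the `n`-th generation below `u` (zero if
that generation is empty); its `q`-norm to the power `q` is the paper's `Ω(u, n)`. -/
noncomputable def spread (n : ℕ) (u : V) : V → ℂ :=
  (T.childN n u).indicator fun _ => (T.gam u n : ℂ)⁻¹

theorem memLp'_spread (lam : V → ℝ) {q : ℝ} (hq : q ≠ 0) (n : ℕ) (u : V) :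
    MemLp' lam q (T.spread n u) :=
  .of_finite_support hq ((T.finite_childN n u).subset Set.support_indicator_subset)

theorem pNorm_spread (lam : V → ℝ) {q : ℝ} (hq : q ≠ 0) (n : ℕ) (u : V) :
    pNorm lam q (T.spread n u) =
      ((∑' v : T.childN n u, lam v) / (T.gam u n : ℝ) ^ q) ^ (1 / q) := by
  have hpt (v : V) : ‖T.spread n u v‖ ^ q * lam v =
      (T.childN n u).indicator (fun v => lam v / (T.gam u n : ℝ) ^ q) v := by
    by_cases hv : v ∈ T.childN n u
    · rw [spread, Set.indicator_of_mem hv, Set.indicator_of_mem hv, norm_inv,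
        Complex.norm_natCast, Real.inv_rpow (Nat.cast_nonneg _), inv_mul_eq_div]
    · rw [spread, Set.indicator_of_notMem hv, Set.indicator_of_notMem hv, norm_zero,
        Real.zero_rpow hq, zero_mul]
  rw [pNorm, tsum_congr hpt, ← tsum_subtype, tsum_div_const]

variable {T} in
theorem bwd_iterate_spread {n : ℕ} {u : V} (hne : (T.childN n u).Nonempty) :
    T.bwd^[n] (T.spread n u) = Pi.single u 1 := by
  have hfin := T.finite_childN n u
  have hgam : (T.gam u n : ℂ) ≠ 0 := Nat.cast_ne_zero.2 ((Set.ncard_pos hfin).2 hne).ne'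
  funext w
  rw [bwd_iterate_apply]
  rcases eq_or_ne w u with rfl | hwu
  · calc ∑ᶠ v ∈ T.childN n w, T.spread n w v
        = ∑ᶠ v ∈ T.childN n w, (T.gam w n : ℂ)⁻¹ :=
          finsum_mem_congr rfl fun v hv => Set.indicator_of_mem hv _
      _ = T.gam w n * (T.gam w n : ℂ)⁻¹ := by
          rw [finsum_mem_eq_finite_toFinset_sum _ hfin, Finset.sum_const,
            ← Set.ncard_eq_toFinset_card _ hfin, nsmul_eq_mul, gam]
      _ = (Pi.single w 1 : V → ℂ) w := by rw [mul_inv_cancel₀ hgam, Pi.single_eq_same]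
  · rw [Pi.single_eq_of_ne hwu]
    exact finsum_mem_eq_zero_of_forall_eq_zero fun v hv =>
      Set.indicator_of_notMem (fun hv' => hwu (eq_of_mem_childN hv hv')) _

end DirTree

/-- For a leafless rooted directed tree with bounded backward
shift `B` on `L^q(T,λ)`: if there is a strictly increasing sequence `n_k` with
`Ω(u, n_k) = γ(u,n_k)^{-q} ∑_{v ∈ childⁿᵏ(u)} λ_v → 0` for every `u`, then `B`
is hypercyclic. -/
theorem stmt_9 {V : Type} [Countable V] [Infinite V] (T : DirTree V)
    (hleafless : ∀ u : V, ¬ T.IsLeaf u) (hroot : ∃ r : V, T.IsRoot r)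
    (lam : V → ℝ) (hlam : ∀ v : V, 0 < lam v) (q : ℝ) (hq : 1 ≤ q)
    (hb : BoundedOn lam q T.bwd)
    (nk : ℕ → ℕ) (hnk : StrictMono nk)
    (hOmega : ∀ u : V,
      Tendsto (fun k : ℕ =>
          (∑' v : T.childN (nk k) u, lam v.1) / ((T.gam u (nk k) : ℝ)) ^ q)
        atTop (nhds 0)) :
    Hypercyclic lam q T.bwd := by
  obtain ⟨r, hr⟩ := hroot
  have hq0 : 0 < q := zero_lt_one.trans_le hq
  refine hb.hypercyclic_of_tendsto_single T.isLinearMap_bwd hlam hq (n := nk) (l := atTop)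
    (fun v => ?_) fun u => ⟨fun k => T.spread (nk k) u, fun k => T.memLp'_spread lam hq0.ne' _ u,
      ?_, ?_⟩
  · obtain ⟨m, hm⟩ := hr.exists_mem_childN v
    refine tendsto_const_nhds.congr' ?_
    filter_upwards [hnk.tendsto_atTop.eventually_gt_atTop m] with k hk
    rw [hr.bwd_iterate_single_eq_zero hm hk, pNorm_zero lam hq0.ne']
  · simpa only [T.pNorm_spread lam hq0.ne', Real.zero_rpow (one_div_ne_zero hq0.ne')] using
      (hOmega u).rpow_const (p := 1 / q) (Or.inr (by positivity))
  · simp only [DirTree.bwd_iterate_spread (DirTree.childN_nonempty hleafless _ u), sub_self,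
      pNorm_zero lam hq0.ne', tendsto_const_nhds]
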